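/- arXiv:2510.01522 — 2 statements merged into one kernel-verified Lean document; each statement's English description precedes it below -/
import Mathlib

section
/- Let m ∈ ℕ with m ≥ 2 and let ε ∈ (0, 1/2). Suppose z ∈ ℂ_1^n satisfies ℓ_1(z, z*) ≤ ε² and z = F_1(z), and V ∈ 𝒱_m satisfies ℓ_m(V, z*) ≤ ε² and V = F_m(V). Then for every real δ ≥ 2√2·(6ε + σ‖W‖/n), one has ℓ_m(V, z) ≤ (8/n)·Σ_{j=1}^n 1{|[Yz]_j| < δn}. -/
open scoped Classical
open Matrix

noncomputable section

namespace PhaseSync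

/-- Euclidean norm of a complex vector. -/
def enorm {k : ℕ} (v : Fin k → ℂ) : ℝ := Real.sqrt (∑ i, ‖v i‖ ^ 2)

/-- Frobenius norm of a complex matrix. -/
def fnorm {k l : ℕ} (A : Matrix (Fin k) (Fin l) ℂ) : ℝ :=
  Real.sqrt (∑ i, ∑ j, ‖A i j‖ ^ 2)

/-- L2 operator norm of a square complex matrix. -/
def opNorm {k : ℕ} (A : Matrix (Fin k) (Fin k) ℂ) : ℝ :=
  ‖Matrix.toEuclideanCLM (𝕜 := ℂ) (n := Fin k) A‖

/-- Indicator function of a proposition. -/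
def ind (P : Prop) : ℝ := if P then 1 else 0

/-- The loss ℓ_m(V, z) = min_{a : ‖a‖=1} ‖V - a zᴴ‖_F² / n. -/
def lossM {k l : ℕ} (V : Matrix (Fin k) (Fin l) ℂ) (z : Fin l → ℂ) : ℝ :=
  sInf { r : ℝ | ∃ a : Fin k → ℂ, enorm a = 1 ∧
    r = fnorm (V - Matrix.vecMulVec a (star z)) ^ 2 / l }

/-- The loss ℓ_1(z', z) = min_{|a|=1} ‖z' - a z‖² / n. -/
def loss1 {l : ℕ} (z' z : Fin l → ℂ) : ℝ :=
  sInf { r : ℝ | ∃ a : ℂ, ‖a‖ = 1 ∧ r = enorm (z' - a • z) ^ 2 / l }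

/-- The mapping F₁: entrywise normalization of Y z. -/
def F1 {l : ℕ} (Y : Matrix (Fin l) (Fin l) ℂ) (z : Fin l → ℂ) : Fin l → ℂ :=
  fun j => if Y.mulVec z j ≠ 0 then Y.mulVec z j / (‖Y.mulVec z j‖ : ℂ) else z j

/-- jth column of a matrix. -/
def col {k l : ℕ} (A : Matrix (Fin k) (Fin l) ℂ) (j : Fin l) : Fin k → ℂ := fun i => A i j

/-- The mapping F_m: columnwise normalization of V Yᴴ. -/
def Fm {k l : ℕ} (Y : Matrix (Fin l) (Fin l) ℂ) (V : Matrix (Fin k) (Fin l) ℂ) :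
    Matrix (Fin k) (Fin l) ℂ :=
  Matrix.of fun i j =>
    if col (V * Yᴴ) j ≠ 0 then (V * Yᴴ) i j / ((enorm (col (V * Yᴴ) j) : ℝ) : ℂ) else V i j

/-- g_t(x) = x / max(|x|, t). -/
def gfun (t : ℝ) (x : ℂ) : ℂ := x / ((max ‖x‖ t : ℝ) : ℂ)

/-- The mapping G(z, s, t), coordinatewise g_t(z*_j s + σ [W z]_j). -/
def G {l : ℕ} (zstar : Fin l → ℂ) (σ : ℝ) (W : Matrix (Fin l) (Fin l) ℂ)
    (z : Fin l → ℂ) (s : ℂ) (t : ℝ) : Fin l → ℂ :=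
  fun j => gfun t (zstar j * s + (σ : ℂ) * W.mulVec z j)

/-- The mapping F₁'(z, s), entrywise normalization of z* s + σ W z. -/
def F1' {l : ℕ} (zstar : Fin l → ℂ) (σ : ℝ) (W : Matrix (Fin l) (Fin l) ℂ)
    (z : Fin l → ℂ) (s : ℂ) : Fin l → ℂ :=
  fun j =>
    if zstar j * s + (σ : ℂ) * W.mulVec z j ≠ 0 then
      (zstar j * s + (σ : ℂ) * W.mulVec z j) /
        ((‖zstar j * s + (σ : ℂ) * W.mulVec z j‖ : ℝ) : ℂ)
    else z j

/-- W with jth row and column zeroed out. -/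
def Wminus {l : ℕ} (W : Matrix (Fin l) (Fin l) ℂ) (j : Fin l) : Matrix (Fin l) (Fin l) ℂ :=
  Matrix.of fun k i => if k = j ∨ i = j then 0 else W k i

/-! Helper lemmas -/

lemma enorm_eq {k : ℕ} (v : Fin k → ℂ) : enorm v = ‖(WithLp.toLp 2 v : EuclideanSpace ℂ (Fin k))‖ := by
  rw [EuclideanSpace.norm_eq]; rfl

lemma enorm_sq {k : ℕ} (v : Fin k → ℂ) : enorm v ^ 2 = ∑ i, ‖v i‖ ^ 2 := by
  unfold enorm; exact Real.sq_sqrt (by positivity)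

lemma fnorm_sq {k l : ℕ} (A : Matrix (Fin k) (Fin l) ℂ) :
    fnorm A ^ 2 = ∑ j, ‖(WithLp.toLp 2 (col A j) : EuclideanSpace ℂ (Fin k))‖ ^ 2 := by
  unfold fnorm
  rw [Real.sq_sqrt (by positivity), Finset.sum_comm]
  refine Finset.sum_congr rfl fun j _ => ?_
  rw [EuclideanSpace.norm_sq_eq]; rfl

lemma opNorm_nonneg {k : ℕ} (A : Matrix (Fin k) (Fin k) ℂ) : 0 ≤ opNorm A := norm_nonneg _

lemma opNorm_bound {k : ℕ} (A : Matrix (Fin k) (Fin k) ℂ) (x : Fin k → ℂ) :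
    ∑ j, ‖∑ i, A j i * x i‖ ^ 2 ≤ opNorm A ^ 2 * ∑ i, ‖x i‖ ^ 2 := by
  have h := (Matrix.toEuclideanCLM (𝕜 := ℂ) (n := Fin k) A).le_opNorm (WithLp.toLp 2 x)
  have h2 := pow_le_pow_left₀ (norm_nonneg _) h 2
  rw [mul_pow, EuclideanSpace.norm_sq_eq, EuclideanSpace.norm_sq_eq] at h2
  simpa [opNorm, Matrix.mulVec, dotProduct] using h2

lemma opNorm_bound_cols {k m : ℕ} (A : Matrix (Fin k) (Fin k) ℂ)
    (d : Fin k → EuclideanSpace ℂ (Fin m)) :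
    ∑ j, ‖∑ i, star (A j i) • d i‖ ^ 2 ≤ opNorm A ^ 2 * ∑ i, ‖d i‖ ^ 2 := by
  simp_rw [EuclideanSpace.norm_sq_eq]
  rw [Finset.sum_comm, Finset.sum_comm (γ := Fin k) (f := fun i j => ‖d i j‖ ^ 2), Finset.mul_sum]
  refine Finset.sum_le_sum fun i _ => ?_
  have h := opNorm_bound A (fun t => star (d t i))
  simp only [norm_star] at h
  refine le_trans (le_of_eq ?_) h
  refine Finset.sum_congr rfl fun j _ => ?_
  congr 1
  rw [← norm_star (∑ t, A j t * star (d t i))]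
  simp [mul_comm]

section core
variable {E : Type*} [NormedAddCommGroup E] [InnerProductSpace ℂ E]

lemma cs_sum {n : ℕ} (c : Fin n → ℂ) (d : Fin n → E) :
    ‖∑ k, c k • d k‖ ^ 2 ≤ (∑ k, ‖c k‖ ^ 2) * ∑ k, ‖d k‖ ^ 2 := by
  refine le_trans ?_ (Finset.sum_mul_sq_le_sq_mul_sq Finset.univ (fun k => ‖c k‖) (fun k => ‖d k‖))
  refine pow_le_pow_left₀ (norm_nonneg _) ?_ 2
  refine (norm_sum_le _ _).trans (le_of_eq ?_)
  simp [norm_smul]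

lemma S_formula {n : ℕ} (z : Fin n → ℂ) (hz : ∀ j, ‖z j‖ = 1) (v : Fin n → E)
    (hv : ∀ j, ‖v j‖ = 1) (b : E) (hb : ‖b‖ = 1) :
    ∑ j, ‖v j - star (z j) • b‖ ^ 2 = 2 * n - 2 * (inner ℂ b (∑ j, z j • v j)).re := by
  have h : ∀ j, ‖v j - star (z j) • b‖ ^ 2 = 2 - 2 * (inner ℂ b (z j • v j)).re := by
    intro j
    rw [@norm_sub_sq ℂ, norm_smul, norm_star, hz, hv, hb]
    have : (inner ℂ (v j) (star (z j) • b)) = star (inner ℂ b (z j • v j)) := by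
      rw [inner_smul_right, inner_smul_right, star_mul', ← inner_conj_symm (v j) b]; rfl
    rw [this]
    have h2 : RCLike.re (star (inner ℂ b (z j • v j))) = (inner ℂ b (z j • v j)).re := Complex.conj_re _
    rw [h2]
    ring
  simp_rw [h]
  rw [inner_sum, Complex.re_sum, Finset.sum_sub_distrib, Finset.mul_sum]
  rw [Finset.sum_const, Finset.card_univ, Fintype.card_fin, nsmul_eq_mul, mul_comm (2 : ℝ) n]

set_option maxHeartbeats 2000000 in
lemma core {n : ℕ} (hn : 1 ≤ n) (zs : Fin n → ℂ) (hzs : ∀ j, ‖zs j‖ = 1)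
    (σ w : ℝ) (hσ : 0 < σ) (hw : 0 ≤ w) (W : Matrix (Fin n) (Fin n) ℂ)
    (hW : ∀ d : Fin n → E, ∑ j, ‖∑ i, star (W j i) • d i‖ ^ 2 ≤ w ^ 2 * ∑ i, ‖d i‖ ^ 2)
    (Y : Matrix (Fin n) (Fin n) ℂ)
    (hY : ∀ j k, Y j k = zs j * star (zs k) + σ * W j k)
    (ε : ℝ) (hε : 0 < ε) (z : Fin n → ℂ) (hz : ∀ j, ‖z j‖ = 1)
    (c : ℂ) (hc : ‖c‖ = 1) (hzc : ∑ j, ‖z j - c * zs j‖ ^ 2 ≤ 4 * ε ^ 2 * n)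
    (v : Fin n → E) (hv : ∀ j, ‖v j‖ = 1)
    (b : E) (hb : ‖b‖ = 1) (hvb : ∑ j, ‖v j - star (zs j) • b‖ ^ 2 ≤ 4 * ε ^ 2 * n)
    (ρ : Fin n → ℝ) (hρ : ∀ j, 0 ≤ ρ j) (hzf : ∀ j, ∑ k, Y j k * z k = ρ j * z j)
    (hvf : ∀ j, ∑ k, star (Y j k) • v k = (‖∑ k, star (Y j k) • v k‖ : ℂ) • v j)
    (δ : ℝ) (hδ : 2 * Real.sqrt 2 * (6 * ε + σ * w / n) ≤ δ) :
    ∃ a : E, ‖a‖ = 1 ∧ ∑ j, ‖v j - star (z j) • a‖ ^ 2 ≤ 8 * ∑ j, ind (ρ j < δ * n) := by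
  have hn0 : (0 : ℝ) < n := by exact_mod_cast hn
  obtain ⟨a, r, ha, hr, har⟩ : ∃ a : E, ∃ r : ℝ, ‖a‖ = 1 ∧ 0 ≤ r ∧ ∑ j, z j • v j = (r : ℂ) • a := by
    by_cases h0 : ∑ j, z j • v j = 0
    · exact ⟨b, 0, hb, le_rfl, by simp [h0]⟩
    · refine ⟨((‖∑ j, z j • v j‖ : ℂ)⁻¹) • ∑ j, z j • v j, ‖∑ j, z j • v j‖, ?_, norm_nonneg _, ?_⟩
      · rw [norm_smul]; simp; exact inv_mul_cancel₀ (norm_ne_zero_iff.2 h0)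
      · rw [smul_smul, mul_inv_cancel₀ (by simpa using h0), one_smul]
  refine ⟨a, ha, ?_⟩
  set d : Fin n → E := fun j => v j - star (z j) • a with hd
  set S := ∑ j, ‖d j‖ ^ 2 with hS
  change S ≤ _
  have hS0 : 0 ≤ S := by positivity
  have hSr : S = 2 * n - 2 * r := by
    rw [hS]; simp only [hd]
    rw [S_formula z hz v hv a ha, har, inner_smul_right, inner_self_eq_norm_sq_to_K, ha]; simp
  have hS16 : S ≤ 16 * ε ^ 2 * n := by
    have hcb : ‖c • b‖ = 1 := by rw [norm_smul, hc, hb, one_mul]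
    have h1 : S ≤ ∑ j, ‖v j - star (z j) • (c • b)‖ ^ 2 := by
      rw [S_formula z hz v hv _ hcb, hSr, har]
      have : (inner ℂ (c • b) ((r : ℂ) • a)).re ≤ r := by
        refine (Complex.re_le_norm _).trans ((norm_inner_le_norm _ _).trans ?_)
        rw [hcb, norm_smul, ha]; simp [abs_of_nonneg hr]
      linarith
    have h2 : ∀ j, ‖v j - star (z j) • (c • b)‖ ^ 2 ≤
        2 * ‖v j - star (zs j) • b‖ ^ 2 + 2 * ‖z j - c * zs j‖ ^ 2 := by
      intro j
      have e : v j - star (z j) • (c • b) = (v j - star (zs j) • b) -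
          (c * star (z j - c * zs j)) • b := by
        have hcc : c * star c = 1 := by
          have := Complex.mul_conj c
          rw [Complex.normSq_eq_norm_sq, hc] at this; simpa using this
        have : c * star (z j - c * zs j) = star (z j) * c - star (zs j) := by
          rw [star_sub, star_mul']; linear_combination (-star (zs j)) * hcc
        rw [this, sub_smul, smul_smul]; abel
      have h3 := norm_sub_le (v j - star (zs j) • b) ((c * star (z j - c * zs j)) • b)
      rw [← e, norm_smul, norm_mul, norm_star, hc, hb, one_mul, mul_one] at h3
      nlinarith [norm_nonneg (v j - star (z j) • (c • b)), sq_nonneg (‖v j - star (zs j) • b‖ - ‖z j - c * zs j‖)]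
    have h3 := Finset.sum_le_sum (fun j (_ : j ∈ Finset.univ) => h2 j)
    rw [Finset.sum_add_distrib, ← Finset.mul_sum, ← Finset.mul_sum] at h3
    linarith
  set s := Real.sqrt S with hs
  set q := Real.sqrt n with hq
  have hs0 : 0 ≤ s := Real.sqrt_nonneg _
  have hq0 : 0 ≤ q := Real.sqrt_nonneg _
  have hss : s ^ 2 = S := Real.sq_sqrt hS0
  have hqq : q ^ 2 = n := Real.sq_sqrt hn0.le
  have hs4 : s ≤ 4 * ε * q := by
    refine le_of_sq_le_sq ?_ (by positivity)
    rw [hss, mul_pow, hqq]; linarith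
  set P := ∑ k, zs k • d k with hP
  have hPb : ‖P‖ ≤ 4 * ε * q * s := by
    have hz2 : ‖∑ k, z k • d k‖ ≤ 2 * ε * q * s := by
      have : ∑ k, z k • d k = ((r - n : ℝ) : ℂ) • a := by
        simp only [hd, smul_sub, Finset.sum_sub_distrib, har, smul_smul]
        have : ∀ j, z j * star (z j) = 1 := by
          intro j
          have := Complex.mul_conj (z j)
          rw [Complex.normSq_eq_norm_sq, hz] at this; simpa using this
        simp only [this, one_smul, Finset.sum_const, Finset.card_univ, Fintype.card_fin]
        rw [Complex.ofReal_sub, sub_smul, Complex.ofReal_natCast, Nat.cast_smul_eq_nsmul]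
      rw [this, norm_smul, ha, mul_one, Complex.norm_real, Real.norm_eq_abs, abs_le]
      constructor <;> nlinarith
    have hz3 : ‖∑ k, (z k - c * zs k) • d k‖ ≤ 2 * ε * q * s := by
      refine le_of_sq_le_sq ?_ (by positivity)
      refine (cs_sum _ _).trans ?_
      rw [mul_pow, hss, mul_pow, hqq]
      refine mul_le_mul_of_nonneg_right ?_ hS0
      linarith
    have e : c • P = ∑ k, z k • d k - ∑ k, (z k - c * zs k) • d k := by
      rw [hP, Finset.smul_sum, ← Finset.sum_sub_distrib]
      refine Finset.sum_congr rfl fun k _ => ?_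
      rw [sub_smul, smul_smul]; abel
    have := norm_sub_le (∑ k, z k • d k) (∑ k, (z k - c * zs k) • d k)
    rw [← e, norm_smul, hc, one_mul] at this
    linarith
  set p : Fin n → E := fun j => ∑ k, star (Y j k) • d k with hp
  set u : Fin n → E := fun j => ∑ k, star (W j k) • d k with hu
  have hpu : ∀ j, p j = star (zs j) • P + (σ : ℂ) • u j := by
    intro j
    simp only [hp, hu, hP, Finset.smul_sum, ← Finset.sum_add_distrib]
    refine Finset.sum_congr rfl fun k _ => ?_
    rw [hY, smul_smul, smul_smul, ← add_smul]
    congr 1; simp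
  have hU : ∑ j, ‖u j‖ ^ 2 ≤ w ^ 2 * S := hW d
  have hU1 : ∑ j, ‖u j‖ ≤ q * (w * s) := by
    refine le_of_sq_le_sq ?_ (by positivity)
    have := Finset.sum_mul_sq_le_sq_mul_sq Finset.univ (fun _ : Fin n => (1 : ℝ)) (fun j => ‖u j‖)
    simp only [one_mul, one_pow, Finset.sum_const, Finset.card_univ, Fintype.card_fin, nsmul_eq_mul, mul_one] at this
    rw [mul_pow, mul_pow, hqq, hss]
    nlinarith
  have hpS : ∑ j, ‖p j‖ ^ 2 ≤ (q * ‖P‖ + σ * (w * s)) ^ 2 := by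
    have h1 : ∀ j, ‖p j‖ ^ 2 ≤ ‖P‖ ^ 2 + 2 * σ * ‖P‖ * ‖u j‖ + σ ^ 2 * ‖u j‖ ^ 2 := by
      intro j
      have h := norm_add_le (star (zs j) • P) ((σ : ℂ) • u j)
      rw [← hpu, norm_smul, norm_smul, norm_star, hzs, one_mul, Complex.norm_real, Real.norm_eq_abs, abs_of_pos hσ] at h
      have := pow_le_pow_left₀ (norm_nonneg _) h 2
      linarith
    have h2 := Finset.sum_le_sum (fun j (_ : j ∈ Finset.univ) => h1 j)
    rw [Finset.sum_add_distrib, Finset.sum_add_distrib, ← Finset.mul_sum, ← Finset.mul_sum] at h2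
    simp only [Finset.sum_const, Finset.card_univ, Fintype.card_fin, nsmul_eq_mul] at h2
    have h3 : 2 * σ * ‖P‖ * ∑ j, ‖u j‖ ≤ 2 * σ * ‖P‖ * (q * (w * s)) :=
      mul_le_mul_of_nonneg_left hU1 (by positivity)
    have h4 : σ ^ 2 * ∑ j, ‖u j‖ ^ 2 ≤ σ ^ 2 * (w ^ 2 * S) :=
      mul_le_mul_of_nonneg_left hU (by positivity)
    rw [← hss] at h4
    rw [← hqq] at h2
    linarith
  set T := δ * n with hT
  have hTb : 2 * Real.sqrt 2 * (6 * ε * n + σ * w) ≤ T := by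
    have := mul_le_mul_of_nonneg_right hδ hn0.le
    refine le_trans (le_of_eq ?_) this
    field_simp
  have h2s : 0 < Real.sqrt 2 := by positivity
  have hT0 : 0 < T := lt_of_lt_of_le (by positivity) hTb
  have hpT : ∑ j, ‖p j‖ ^ 2 * 8 ≤ T ^ 2 * S := by
    have h1 : q * ‖P‖ + σ * (w * s) ≤ (6 * ε * n + σ * w) * s := by
      have : q * ‖P‖ ≤ q * (4 * ε * q * s) := mul_le_mul_of_nonneg_left hPb hq0
      have h3 : 0 ≤ ε * n * s := by positivity
      rw [← hqq] at h3 ⊢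
      nlinarith
    have h2 := pow_le_pow_left₀ (by positivity) h1 2
    have h3 := pow_le_pow_left₀ (by positivity) hTb 2
    rw [mul_pow, mul_pow, Real.sq_sqrt (by norm_num)] at h3
    have h4 := mul_le_mul_of_nonneg_right h3 hS0
    rw [mul_pow, hss] at h2
    rw [← Finset.sum_mul]
    linarith
  have hgood : ∀ j, T ^ 2 * ‖d j‖ ^ 2 ≤ 4 * ‖p j‖ ^ 2 + 4 * T ^ 2 * ind (ρ j < T) := by
    intro j
    by_cases hj : ρ j < T
    · have h1 : ‖d j‖ ≤ 2 := by
        have := norm_sub_le (v j) (star (z j) • a)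
        rw [norm_smul, norm_star, hz, hv, ha] at this
        simp only [hd]; linarith
      have h2 : ‖d j‖ ^ 2 ≤ 4 := by nlinarith [norm_nonneg (d j)]
      rw [ind, if_pos hj]
      nlinarith [mul_le_mul_of_nonneg_left h2 (sq_nonneg T), sq_nonneg ‖p j‖]
    · rw [ind, if_neg hj]
      set x := ∑ k, star (Y j k) • v k with hx
      have hy : ∑ k, star (Y j k) • (star (z k) • a) = ((ρ j : ℂ) * star (z j)) • a := by
        simp_rw [smul_smul]
        rw [← Finset.sum_smul]
        congr 1
        have := congrArg star (hzf j)
        simpa [mul_comm] using this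
      have hpx : p j = x - ((ρ j : ℂ) * star (z j)) • a := by
        simp only [hp, hd, smul_sub, Finset.sum_sub_distrib, hy, hx]
      have hny : ‖((ρ j : ℂ) * star (z j)) • a‖ = ρ j := by
        rw [norm_smul, norm_mul, norm_star, hz, ha]; simp [abs_of_nonneg (hρ j)]
      have h1 : |ρ j - ‖x‖| ≤ ‖p j‖ := by
        have := abs_norm_sub_norm_le x (((ρ j : ℂ) * star (z j)) • a)
        rw [hny, ← hpx] at this
        rwa [abs_sub_comm]
      have h2 : (ρ j : ℂ) • d j = ((ρ j - ‖x‖ : ℝ) : ℂ) • v j + p j := by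
        have hvj : x = (‖x‖ : ℂ) • v j := hvf j
        rw [hpx, Complex.ofReal_sub, sub_smul, ← hvj]
        simp only [hd, smul_sub, smul_smul]; abel
      have h3 := norm_add_le (((ρ j - ‖x‖ : ℝ) : ℂ) • v j) (p j)
      rw [← h2, norm_smul, norm_smul, hv, Complex.norm_real, Complex.norm_real, Real.norm_eq_abs, Real.norm_eq_abs, abs_of_nonneg (hρ j)] at h3
      have h4 : T * ‖d j‖ ≤ 2 * ‖p j‖ := by
        have := mul_le_mul_of_nonneg_right (not_lt.1 hj) (norm_nonneg (d j))
        linarith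
      have := pow_le_pow_left₀ (by positivity) h4 2
      linarith
  have hsum := Finset.sum_le_sum (fun j (_ : j ∈ Finset.univ) => hgood j)
  rw [Finset.sum_add_distrib, ← Finset.mul_sum, ← Finset.mul_sum, ← Finset.mul_sum] at hsum
  rw [← Finset.sum_mul] at hpT
  have hT2 : 0 < T ^ 2 := by positivity
  have : T ^ 2 * S ≤ T ^ 2 * (8 * ∑ j, ind (ρ j < T)) := by linarith
  exact le_of_mul_le_mul_left this hT2

end core

theorem stmt1 {n m : ℕ} (hn : 1 ≤ n) (hm : 2 ≤ m)
    (zstar : Fin n → ℂ) (hzstar : ∀ j, ‖zstar j‖ = 1)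
    (σ : ℝ) (hσ : 0 < σ) (W : Matrix (Fin n) (Fin n) ℂ) (hW : W.IsHermitian)
    (Y : Matrix (Fin n) (Fin n) ℂ)
    (hY : Y = Matrix.vecMulVec zstar (star zstar) + (σ : ℂ) • W)
    (ε : ℝ) (hε : 0 < ε ∧ ε < 1 / 2)
    (z : Fin n → ℂ) (hz1 : ∀ j, ‖z j‖ = 1) (hz2 : loss1 z zstar ≤ ε ^ 2)
    (hzfix : z = F1 Y z)
    (V : Matrix (Fin m) (Fin n) ℂ) (hV1 : ∀ j, enorm (col V j) = 1)
    (hV2 : lossM V zstar ≤ ε ^ 2) (hVfix : V = Fm Y V)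
    (δ : ℝ) (hδ : 2 * Real.sqrt 2 * (6 * ε + σ * opNorm W / n) ≤ δ) :
    lossM V z ≤ (8 / (n : ℝ)) * ∑ j : Fin n, ind (‖Y.mulVec z j‖ < δ * n) := by
  have hn0 : (0 : ℝ) < n := by exact_mod_cast hn
  have hε0 := hε.1
  have hlt : ε ^ 2 < 4 * ε ^ 2 := by nlinarith
  obtain ⟨_, ⟨c, hc, rfl⟩, hc2⟩ := exists_lt_of_csInf_lt
    (s := { r : ℝ | ∃ a : ℂ, ‖a‖ = 1 ∧ r = enorm (z - a • zstar) ^ 2 / n })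
    ⟨_, 1, by simp, rfl⟩ (lt_of_le_of_lt hz2 hlt)
  obtain ⟨_, ⟨b, hb, rfl⟩, hb2⟩ := exists_lt_of_csInf_lt
    (s := { r : ℝ | ∃ a : Fin m → ℂ, enorm a = 1 ∧
      r = fnorm (V - Matrix.vecMulVec a (star zstar)) ^ 2 / n })
    ⟨_, col V ⟨0, hn⟩, hV1 _, rfl⟩ (lt_of_le_of_lt hV2 hlt)
  rw [div_lt_iff₀ hn0, enorm_sq] at hc2
  rw [div_lt_iff₀ hn0, fnorm_sq] at hb2
  have hcol : ∀ (a : Fin m → ℂ) (y : Fin n → ℂ) (j : Fin n),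
      (WithLp.toLp 2 (col (V - Matrix.vecMulVec a (star y)) j) : EuclideanSpace ℂ (Fin m)) =
      WithLp.toLp 2 (col V j) - star (y j) • WithLp.toLp 2 a := by
    intro a y j
    ext i
    simp [col, Matrix.vecMulVec, mul_comm]
  have hYcol : ∀ j, (∑ k, star (Y j k) • (WithLp.toLp 2 (col V k) : EuclideanSpace ℂ (Fin m))) =
      WithLp.toLp 2 (col (V * Yᴴ) j) := by
    intro j
    ext i
    simp [col, Matrix.mul_apply, mul_comm]
  simp_rw [hcol] at hb2
  obtain ⟨a, ha, hfin⟩ := core (E := EuclideanSpace ℂ (Fin m)) hn zstar hzstar σ (opNorm W) hσ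
    (opNorm_nonneg W) W (opNorm_bound_cols W) Y
    (by intro j k; simp [hY, Matrix.vecMulVec]) ε hε0 z hz1 c hc (by simpa using hc2.le)
    (fun j => WithLp.toLp 2 (col V j)) (fun j => by rw [← enorm_eq]; exact hV1 j)
    (WithLp.toLp 2 b) (by rw [← enorm_eq]; exact hb) hb2.le
    (fun j => ‖Y.mulVec z j‖) (fun j => norm_nonneg _)
    (by
      intro j
      change Y.mulVec z j = _
      have h := congrFun hzfix j
      by_cases h0 : Y.mulVec z j = 0
      · simp [h0]
      · rw [h]
        simp only [F1]
        rw [if_pos h0, mul_div_cancel₀]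
        simpa using h0)
    (by
      intro j
      rw [hYcol, ← enorm_eq]
      by_cases h0 : col (V * Yᴴ) j = 0
      · simp [h0, enorm]
      · have hne : (enorm (col (V * Yᴴ) j) : ℂ) ≠ 0 := by
          rw [enorm_eq]; simpa using h0
        ext i
        have h := congrFun (congrFun hVfix i) j
        simp only [Fm, Matrix.of_apply] at h
        rw [if_pos h0] at h
        simp only [PiLp.smul_apply, smul_eq_mul]
        change (V * Yᴴ) i j = _ * V i j
        rw [h, mul_div_cancel₀ _ hne])
    δ hδ
  have hle : lossM V z ≤ fnorm (V - Matrix.vecMulVec (WithLp.ofLp a) (star z)) ^ 2 / n := by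
    refine csInf_le ⟨0, ?_⟩ ⟨_, by rw [enorm_eq]; exact ha, rfl⟩
    rintro _ ⟨a, -, rfl⟩
    positivity
  refine hle.trans ?_
  rw [fnorm_sq, div_mul_eq_mul_div]
  simp_rw [hcol]
  gcongr


end PhaseSync
end
end

section
/- Let s ∈ ℂ, t > 0 with t ≥ 2σ‖W‖, and j ∈ [n]. Define the iterates z^{(0)} = z*, z^{(T)} = G(z^{(T−1)}, s, t) for T ∈ ℕ, and z^{(0,−j)} = z*, z^{(T,−j)} = G^{(−j)}(z^{(T−1,−j)}, s, t) for T ∈ ℕ. Then ‖z^{(T)} − z^{(T,−j)}‖ ≤ 3 for every T ∈ ℕ. Consequently, the fixed point z of G(·, s, t) and the fixed point z^{(−j)} of G^{(−j)}(·, s, t) satisfy ‖z − z^{(−j)}‖ ≤ 3. -/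
open scoped Classical
open Matrix

noncomputable section

namespace PhaseSync

lemma gfun_norm_le {t : ℝ} (ht : 0 < t) (x : ℂ) : ‖gfun t x‖ ≤ 1 := by
  have h : 0 < max ‖x‖ t := lt_max_of_lt_right ht
  unfold gfun
  rw [norm_div, Complex.norm_real, Real.norm_of_nonneg h.le, div_le_one h]
  exact le_max_left _ _

lemma gfun_lip {t : ℝ} (ht : 0 < t) (x y : ℂ) :
    t * ‖gfun t x - gfun t y‖ ≤ ‖x - y‖ := by
  have key : ∀ x : ℂ, ∃ α : ℝ, 0 ≤ α ∧ x = ((α + t : ℝ) : ℂ) * gfun t x ∧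
      α * ‖gfun t x‖ ^ 2 = α := by
    intro x
    have h : 0 < max ‖x‖ t := lt_max_of_lt_right ht
    refine ⟨max ‖x‖ t - t, by simp, ?_, ?_⟩
    · unfold gfun
      have : ((max ‖x‖ t : ℝ) : ℂ) ≠ 0 := by exact_mod_cast h.ne'
      rw [sub_add_cancel]
      field_simp
    · rcases le_total ‖x‖ t with h1 | h1
      · simp [max_eq_right h1]
      · unfold gfun
        rw [norm_div, Complex.norm_real, Real.norm_of_nonneg h.le, max_eq_left h1,
          div_self (by linarith)]
        simp
  obtain ⟨α, hα, hx, hxα⟩ := key x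
  obtain ⟨β, hβ, hy, hyβ⟩ := key y
  have hu := gfun_norm_le ht x
  have hv := gfun_norm_le ht y
  generalize gfun t x = u at *
  generalize gfun t y = v at *
  have hu2 : ‖u‖ ^ 2 ≤ 1 := pow_le_one₀ (norm_nonneg _) hu
  have hv2 : ‖v‖ ^ 2 ≤ 1 := pow_le_one₀ (norm_nonneg _) hv
  apply le_of_sq_le_sq _ (norm_nonneg _)
  rw [mul_pow, hx, hy]
  simp only [Complex.sq_norm, Complex.normSq_apply, Complex.sub_re, Complex.sub_im, Complex.mul_re, Complex.mul_im, Complex.ofReal_re,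
    Complex.ofReal_im, zero_mul, sub_zero, add_zero] at hu2 hv2 hxα hyβ ⊢
  have hr : u.re * v.re + u.im * v.im ≤ 1 := by
    nlinarith [sq_nonneg (u.re - v.re), sq_nonneg (u.im - v.im)]
  have h1 := mul_nonneg (mul_nonneg ht.le hα) (sub_nonneg.2 hr)
  have h2 := mul_nonneg (mul_nonneg ht.le hβ) (sub_nonneg.2 hr)
  have h3 := congrArg (fun a => t * a) hxα
  have h4 := congrArg (fun a => t * a) hyβ
  beta_reduce at h3 h4
  nlinarith [sq_nonneg (α * u.re - β * v.re), sq_nonneg (α * u.im - β * v.im)]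

lemma mulVec_bound {n : ℕ} (W : Matrix (Fin n) (Fin n) ℂ) (v : Fin n → ℂ) :
    ∑ k, ‖W.mulVec v k‖ ^ 2 ≤ opNorm W ^ 2 * ∑ k, ‖v k‖ ^ 2 := by
  have h := (Matrix.toEuclideanCLM (𝕜 := ℂ) (n := Fin n) W).le_opNorm (WithLp.toLp 2 v)
  have h2 := pow_le_pow_left₀ (norm_nonneg _) h 2
  rw [mul_pow, EuclideanSpace.norm_sq_eq, EuclideanSpace.norm_sq_eq] at h2
  simpa [opNorm] using h2

lemma step {n : ℕ} (zstar : Fin n → ℂ) (σ : ℝ) (hσ : 0 < σ) (W : Matrix (Fin n) (Fin n) ℂ)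
    (s : ℂ) (t : ℝ) (ht : 0 < t) (ht2 : 2 * σ * opNorm W ≤ t) (j : Fin n)
    (z w : Fin n → ℂ) (hz : ‖z j‖ ≤ 1) :
    4 * ∑ k ∈ Finset.univ.erase j,
      ‖G zstar σ W z s t k - G zstar σ (Wminus W j) w s t k‖ ^ 2 ≤
    1 + ∑ k ∈ Finset.univ.erase j, ‖z k - w k‖ ^ 2 := by
  set d : Fin n → ℂ := z - Function.update w j 0 with hd
  have hO : 0 ≤ opNorm W := norm_nonneg _
  have hdsum : ∑ k, ‖d k‖ ^ 2 ≤ 1 + ∑ k ∈ Finset.univ.erase j, ‖z k - w k‖ ^ 2 := by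
    rw [← Finset.add_sum_erase _ _ (Finset.mem_univ j)]
    apply add_le_add
    · simpa [hd] using hz
    · apply le_of_eq
      apply Finset.sum_congr rfl
      intro k hk
      simp [hd, Function.update_of_ne (Finset.ne_of_mem_erase hk)]
  have hterm : ∀ k ∈ Finset.univ.erase j,
      t ^ 2 * ‖G zstar σ W z s t k - G zstar σ (Wminus W j) w s t k‖ ^ 2 ≤
        σ ^ 2 * ‖W.mulVec d k‖ ^ 2 := by
    intro k hk
    have hkj := Finset.ne_of_mem_erase hk
    have hw : (Wminus W j).mulVec w k = W.mulVec (Function.update w j 0) k := by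
      simp only [Matrix.mulVec, dotProduct]
      apply Finset.sum_congr rfl
      intro i _
      by_cases hi : i = j
      · subst hi; simp [Wminus]
      · simp [Wminus, hkj, hi]
    have h := gfun_lip ht (zstar k * s + (σ : ℂ) * W.mulVec z k)
      (zstar k * s + (σ : ℂ) * (Wminus W j).mulVec w k)
    have he : (zstar k * s + (σ : ℂ) * W.mulVec z k) -
      (zstar k * s + (σ : ℂ) * (Wminus W j).mulVec w k) = (σ : ℂ) * W.mulVec d k := by
      rw [hw, hd, Matrix.mulVec_sub, Pi.sub_apply]; ring
    rw [he, norm_mul, Complex.norm_real, Real.norm_of_nonneg hσ.le] at h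
    rw [← mul_pow, ← mul_pow]
    exact pow_le_pow_left₀ (by positivity) h 2
  have hsum := Finset.sum_le_sum hterm
  rw [← Finset.mul_sum, ← Finset.mul_sum] at hsum
  have h1 : ∑ k ∈ Finset.univ.erase j, ‖W.mulVec d k‖ ^ 2 ≤ ∑ k, ‖W.mulVec d k‖ ^ 2 :=
    Finset.sum_le_sum_of_subset_of_nonneg (Finset.erase_subset _ _) (fun _ _ _ => by positivity)
  have h2 := h1.trans (mulVec_bound W d)
  have h3 : (2 * σ * opNorm W) ^ 2 ≤ t ^ 2 := pow_le_pow_left₀ (by positivity) ht2 2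
  refine le_trans ?_ hdsum
  have hS : 0 ≤ ∑ k, ‖d k‖ ^ 2 := Finset.sum_nonneg (fun _ _ => by positivity)
  generalize (∑ k, ‖d k‖ ^ 2) = S at *
  generalize (∑ k ∈ Finset.univ.erase j, ‖W.mulVec d k‖ ^ 2) = B at *
  have h4 := mul_le_mul_of_nonneg_right h3 hS
  have h5 := mul_le_mul_of_nonneg_left h2 (sq_nonneg σ)
  have ht' : 0 < t ^ 2 := by positivity
  refine le_of_mul_le_mul_left ?_ ht'
  nlinarith

lemma fin_bound {n : ℕ} (j : Fin n) (z w : Fin n → ℂ) (hz : ‖z j‖ ≤ 1) (hw : ‖w j‖ ≤ 1)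
    (h : 3 * ∑ k ∈ Finset.univ.erase j, ‖z k - w k‖ ^ 2 ≤ 1) : enorm (z - w) ≤ 3 := by
  unfold enorm
  rw [Real.sqrt_le_left (by norm_num), ← Finset.add_sum_erase _ _ (Finset.mem_univ j)]
  have h1 : ‖z j - w j‖ ≤ 2 := (norm_sub_le _ _).trans (by linarith)
  have h2 := pow_le_pow_left₀ (norm_nonneg _) h1 2
  simp only [Pi.sub_apply]
  linarith

theorem stmt19 {n : ℕ} (hn : 1 ≤ n)
    (zstar : Fin n → ℂ) (hzstar : ∀ j, ‖zstar j‖ = 1)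
    (σ : ℝ) (hσ : 0 < σ) (W : Matrix (Fin n) (Fin n) ℂ) (hW : W.IsHermitian)
    (s : ℂ) (t : ℝ) (ht : 0 < t) (ht2 : 2 * σ * opNorm W ≤ t) (j : Fin n)
    (zseq zseqj : ℕ → Fin n → ℂ)
    (hz0 : zseq 0 = zstar) (hzT : ∀ T : ℕ, zseq (T + 1) = G zstar σ W (zseq T) s t)
    (hzj0 : zseqj 0 = zstar)
    (hzjT : ∀ T : ℕ, zseqj (T + 1) = G zstar σ (Wminus W j) (zseqj T) s t)
    (z zmj : Fin n → ℂ)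
    (hz : (∀ i, ‖z i‖ ≤ 1) ∧ z = G zstar σ W z s t)
    (hzmj : (∀ i, ‖zmj i‖ ≤ 1) ∧ zmj = G zstar σ (Wminus W j) zmj s t) :
    (∀ T : ℕ, enorm (zseq T - zseqj T) ≤ 3) ∧ enorm (z - zmj) ≤ 3 := by
  constructor
  · have hb : ∀ T, ‖zseq T j‖ ≤ 1 := by
      intro T
      cases T with
      | zero => rw [hz0]; exact (hzstar j).le
      | succ T => rw [hzT]; exact gfun_norm_le ht _
    have hbj : ∀ T, ‖zseqj T j‖ ≤ 1 := by
      intro T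
      cases T with
      | zero => rw [hzj0]; exact (hzstar j).le
      | succ T => rw [hzjT]; exact gfun_norm_le ht _
    intro T
    apply fin_bound j _ _ (hb T) (hbj T)
    induction T with
    | zero => simp [hz0, hzj0]
    | succ T ih =>
      have h := step zstar σ hσ W s t ht ht2 j (zseq T) (zseqj T) (hb T)
      rw [← hzT, ← hzjT] at h
      linarith
  · apply fin_bound j _ _ (hz.1 j) (hzmj.1 j)
    have h := step zstar σ hσ W s t ht ht2 j z zmj (hz.1 j)
    rw [← hz.2, ← hzmj.2] at h
    linarith

end PhaseSync
end
end
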